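/- Let f : ℝ^d → ℝ be a convex function, S an invertible d × d real matrix, and let μ_{ij} and μ^S_{ij} be the second derivative measures of f and of x ↦ f(Sx) respectively. Then for every bounded Borel set A ⊆ ℝ^d, the matrix-valued identity μ^S(S^{−1}A) = (1/|det S|) · Sᵀ μ(A) S holds, where μ(A) denotes the matrix (μ_{ij}(A))_{ij} and μ^S(S^{−1}A) the matrix (μ^S_{ij}(S^{−1}A))_{ij}. -/

import Mathlib

open MeasureTheory Filter Metric
open scoped Topology ENNReal NNReal

/-- The second partial derivative `∂_i ∂_j φ` at `x`. -/
noncomputable def secondPartial (d : ℕ) (φ : EuclideanSpace ℝ (Fin d) → ℝ)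
    (i j : Fin d) (x : EuclideanSpace ℝ (Fin d)) : ℝ :=
  fderiv ℝ (fun z => fderiv ℝ φ z (EuclideanSpace.single j 1)) x (EuclideanSpace.single i 1)

/-- `μp, μn` represent the (signed) second derivative measures `μ_{ij} = μp i j - μn i j`
of the function `g`. -/
def IsSecondDerivMeasures (d : ℕ) (g : EuclideanSpace ℝ (Fin d) → ℝ)
    (μp μn : Fin d → Fin d → Measure (EuclideanSpace ℝ (Fin d))) : Prop :=
  (∀ i j, IsLocallyFiniteMeasure (μp i j)) ∧ (∀ i j, IsLocallyFiniteMeasure (μn i j)) ∧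
  ∀ i j, ∀ φ : EuclideanSpace ℝ (Fin d) → ℝ, ContDiff ℝ (⊤ : ℕ∞) φ → HasCompactSupport φ →
    (∫ x, φ x ∂(μp i j)) - (∫ x, φ x ∂(μn i j)) = ∫ x, g x * secondPartial d φ i j x

open scoped ContDiff

/-- A finite linear combination of locally finite measures which integrates every test function
to zero vanishes on bounded sets. -/
theorem sum_mul_measureReal_eq_zero_of_integral_contDiff {E : Type*} [NormedAddCommGroup E]
    [NormedSpace ℝ E] [FiniteDimensional ℝ E] [MeasurableSpace E] [BorelSpace E]
    {ι : Type*} [Fintype ι] (c : ι → ℝ) (ν : ι → Measure E)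
    [∀ a, IsFiniteMeasureOnCompacts (ν a)]
    (h : ∀ ψ : E → ℝ, ContDiff ℝ ∞ ψ → HasCompactSupport ψ → ∑ a, c a * ∫ x, ψ x ∂(ν a) = 0)
    {A : Set E} (hAbdd : Bornology.IsBounded A) :
    ∑ a, c a * (ν a).real A = 0 := by
  have : ProperSpace E := FiniteDimensional.proper_real E
  set σ := Measure.sum ν
  have hac : ∀ a, ν a ≪ σ := fun a => Measure.absolutelyContinuous_sum_right a .rfl
  have hzero : ∀ᵐ x ∂σ, ∑ a, c a * ((ν a).rnDeriv σ x).toReal = 0 := by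
    refine ae_eq_zero_of_integral_contDiff_smul_eq_zero ?_ fun ψ hψ hψc => ?_
    · rw [locallyIntegrable_iff]
      intro K hK
      exact integrable_finsetSum _ fun a _ =>
        (Measure.integrableOn_toReal_rnDeriv hK.measure_lt_top.ne).const_mul _
    · have hint : ∀ a, Integrable (fun x => ((ν a).rnDeriv σ x).toReal • ψ x) σ := fun a =>
        (integrable_rnDeriv_smul_iff (hac a)).2 (hψ.continuous.integrable_of_hasCompactSupport hψc)
      calc ∫ x, ψ x • ∑ a, c a * ((ν a).rnDeriv σ x).toReal ∂σ
          = ∫ x, ∑ a, c a * (((ν a).rnDeriv σ x).toReal • ψ x) ∂σ := by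
            congr 1 with x
            rw [smul_eq_mul, Finset.mul_sum]
            exact Finset.sum_congr rfl fun a _ => by rw [smul_eq_mul]; ring
        _ = 0 := by
            rw [integral_finsetSum _ fun a _ => (hint a).const_mul _]
            simp_rw [integral_const_mul, integral_rnDeriv_smul (hac _)]
            exact h ψ hψ hψc
  calc ∑ a, c a * (ν a).real A
      = ∫ x in A, ∑ a, c a * ((ν a).rnDeriv σ x).toReal ∂σ := by
        rw [integral_finsetSum _ fun a _ =>
          (Measure.integrableOn_toReal_rnDeriv hAbdd.measure_lt_top.ne).const_mul _]
        simp_rw [integral_const_mul, Measure.setIntegral_toReal_rnDeriv (hac _)]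
    _ = 0 := integral_eq_zero_of_ae (ae_restrict_of_ae hzero)

/-- Uniqueness of signed measures, given as differences of locally finite measures, from their
action on test functions: if `p - n` and `∑ a, c a • (P a - N a)` agree on test functions, they
agree on bounded sets. -/
theorem measureReal_sub_eq_sum_of_integral_contDiff {E : Type*} [NormedAddCommGroup E]
    [NormedSpace ℝ E] [FiniteDimensional ℝ E] [MeasurableSpace E] [BorelSpace E]
    {ι : Type*} [Fintype ι] (c : ι → ℝ) (p n : Measure E) (P N : ι → Measure E)
    [IsFiniteMeasureOnCompacts p] [IsFiniteMeasureOnCompacts n]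
    [∀ a, IsFiniteMeasureOnCompacts (P a)] [∀ a, IsFiniteMeasureOnCompacts (N a)]
    (h : ∀ ψ : E → ℝ, ContDiff ℝ ∞ ψ → HasCompactSupport ψ →
      ∫ x, ψ x ∂p - ∫ x, ψ x ∂n = ∑ a, c a * (∫ x, ψ x ∂(P a) - ∫ x, ψ x ∂(N a)))
    {A : Set E} (hAbdd : Bornology.IsBounded A) :
    p.real A - n.real A = ∑ a, c a * ((P a).real A - (N a).real A) := by
  let C : Option ι → ℝ := fun o => o.elim 1 fun a => -c a
  let P' : Option ι → Measure E := fun o => o.elim p P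
  let N' : Option ι → Measure E := fun o => o.elim n N
  have : ∀ s, IsFiniteMeasureOnCompacts (Sum.elim P' N' s) := by
    rintro ((_ | a) | (_ | a)) <;> simp only [P', N', Sum.elim_inl, Sum.elim_inr, Option.elim] <;>
      infer_instance
  have key := sum_mul_measureReal_eq_zero_of_integral_contDiff (Sum.elim C (-C)) (Sum.elim P' N')
    (fun ψ hψ hψc => by
      have := h ψ hψ hψc
      simp only [mul_sub, Finset.sum_sub_distrib] at this
      simp [Fintype.sum_sum_type, Fintype.sum_option, C, P', N']
      linarith) hAbdd
  simp [Fintype.sum_sum_type, Fintype.sum_option, C, P', N'] at key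
  simp only [mul_sub, Finset.sum_sub_distrib]
  linarith

/-- The linear automorphism of Euclidean space given by an invertible matrix. -/
noncomputable def Matrix.euclideanEquiv {d : ℕ} (S : Matrix (Fin d) (Fin d) ℝ)
    (hS : IsUnit S.det) : EuclideanSpace ℝ (Fin d) ≃L[ℝ] EuclideanSpace ℝ (Fin d) :=
  (LinearEquiv.ofIsUnitDet (f := Matrix.toLpLin 2 2 S) (v := PiLp.basisFun 2 ℝ (Fin d))
    (v' := PiLp.basisFun 2 ℝ (Fin d))
    (by rwa [Matrix.toLpLin_eq_toLin, LinearMap.toMatrix_toLin])).toContinuousLinearEquiv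

theorem Matrix.euclideanEquiv_apply {d : ℕ} (S : Matrix (Fin d) (Fin d) ℝ)
    (hS : IsUnit S.det) (x : EuclideanSpace ℝ (Fin d)) :
    S.euclideanEquiv hS x = WithLp.toLp 2 (S.mulVec x) := rfl

theorem Matrix.euclideanEquiv_single {d : ℕ} (S : Matrix (Fin d) (Fin d) ℝ)
    (hS : IsUnit S.det) (j : Fin d) :
    S.euclideanEquiv hS (EuclideanSpace.single j 1) =
      ∑ l, S l j • EuclideanSpace.single l (1 : ℝ) := by
  ext k
  simp [Matrix.euclideanEquiv_apply, Finset.sum_apply, Pi.single_apply]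

theorem Matrix.integral_comp_euclideanEquiv {d : ℕ} (S : Matrix (Fin d) (Fin d) ℝ)
    (hS : IsUnit S.det) (g : EuclideanSpace ℝ (Fin d) → ℝ) :
    ∫ x, g (S.euclideanEquiv hS x) = 1 / |S.det| * ∫ x, g x := by
  have hmap : Measure.map (S.euclideanEquiv hS) volume =
      ENNReal.ofReal |(S.det)⁻¹| • (volume : Measure (EuclideanSpace ℝ (Fin d))) := by
    have := Measure.map_linearMap_addHaar_eq_smul_addHaar
      (volume : Measure (EuclideanSpace ℝ (Fin d))) (f := Matrix.toLpLin 2 2 S)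
      (by rw [LinearMap.det_toLpLin]; exact hS.ne_zero)
    rwa [LinearMap.det_toLpLin] at this
  have hint := (S.euclideanEquiv hS).toHomeomorph.measurableEmbedding.integral_map
    (μ := volume) g
  rw [ContinuousLinearEquiv.coe_toHomeomorph, hmap] at hint
  rw [← hint, integral_smul_measure, ENNReal.toReal_ofReal (abs_nonneg _), smul_eq_mul, abs_inv, one_div]

section secondPartial

variable {d : ℕ} {ψ : EuclideanSpace ℝ (Fin d) → ℝ}

theorem contDiff_fderiv_apply (hψ : ContDiff ℝ ∞ ψ) (v : EuclideanSpace ℝ (Fin d)) :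
    ContDiff ℝ ∞ fun z => fderiv ℝ ψ z v :=
  (hψ.fderiv_right (m := ∞) le_rfl).clm_apply contDiff_const

theorem continuous_secondPartial (hψ : ContDiff ℝ ∞ ψ) (i j : Fin d) :
    Continuous (secondPartial d ψ i j) :=
  (contDiff_fderiv_apply (contDiff_fderiv_apply hψ _) _).continuous

theorem HasCompactSupport.secondPartial (hψc : HasCompactSupport ψ) (i j : Fin d) :
    HasCompactSupport (secondPartial d ψ i j) :=
  (hψc.fderiv_apply ℝ _).fderiv_apply ℝ _

theorem secondPartial_comp_euclideanEquiv (hψ : ContDiff ℝ ∞ ψ) (S : Matrix (Fin d) (Fin d) ℝ)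
    (hS : IsUnit S.det) (i j : Fin d) (x : EuclideanSpace ℝ (Fin d)) :
    secondPartial d (ψ ∘ S.euclideanEquiv hS) i j x =
      ∑ a : Fin d × Fin d, S a.1 i * S a.2 j *
        secondPartial d ψ a.1 a.2 (S.euclideanEquiv hS x) := by
  have hinner : (fun z => fderiv ℝ (ψ ∘ S.euclideanEquiv hS) z (EuclideanSpace.single j 1)) =
      (fun z => ∑ l, S l j * fderiv ℝ ψ z (EuclideanSpace.single l 1)) ∘ S.euclideanEquiv hS := by
    ext z
    simp [ContinuousLinearEquiv.comp_right_fderiv, Matrix.euclideanEquiv_single]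
  have hdiff : ∀ l, Differentiable ℝ fun z => fderiv ℝ ψ z (EuclideanSpace.single l 1) :=
    fun l => (contDiff_fderiv_apply hψ _).differentiable (by simp)
  unfold secondPartial
  rw [hinner, ContinuousLinearEquiv.comp_right_fderiv, ContinuousLinearMap.comp_apply,
    fderiv_fun_sum fun l _ => ((hdiff l) _).const_mul _]
  simp_rw [fderiv_const_mul ((hdiff _) _)]
  rw [ContinuousLinearEquiv.coe_coe, Matrix.euclideanEquiv_single, Fintype.sum_prod_type]
  simp [Finset.mul_sum, mul_assoc]

end secondPartial

theorem second_deriv_measure_change_of_variables (d : ℕ)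
    (f : EuclideanSpace ℝ (Fin d) → ℝ) (hf : ConvexOn ℝ Set.univ f)
    (S : Matrix (Fin d) (Fin d) ℝ) (hS : IsUnit S.det)
    (μp μn μSp μSn : Fin d → Fin d → Measure (EuclideanSpace ℝ (Fin d)))
    (hμ : IsSecondDerivMeasures d f μp μn)
    (hμS : IsSecondDerivMeasures d
      (fun x => f (WithLp.toLp 2 (S.mulVec x) : EuclideanSpace ℝ (Fin d))) μSp μSn)
    (A : Set (EuclideanSpace ℝ (Fin d))) (hA : MeasurableSet A)
    (hAbdd : Bornology.IsBounded A) :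
    (Matrix.of fun i j =>
        ((μSp i j) ((fun y : EuclideanSpace ℝ (Fin d) =>
          (WithLp.toLp 2 (S.mulVec y) : EuclideanSpace ℝ (Fin d))) ⁻¹' A)).toReal -
        ((μSn i j) ((fun y : EuclideanSpace ℝ (Fin d) =>
          (WithLp.toLp 2 (S.mulVec y) : EuclideanSpace ℝ (Fin d))) ⁻¹' A)).toReal) =
      (1 / |S.det|) •
        (S.transpose *
          (Matrix.of fun i j => ((μp i j) A).toReal - ((μn i j) A).toReal) * S) := by
  obtain ⟨hp, hn, hμ⟩ := hμ
  obtain ⟨hSp, hSn, hμS⟩ := hμS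
  have hfc : Continuous f := hf.locallyLipschitz.continuous
  let L := S.euclideanEquiv hS
  have htest : ∀ i j (ψ : EuclideanSpace ℝ (Fin d) → ℝ), ContDiff ℝ ∞ ψ → HasCompactSupport ψ →
      ∫ x, ψ x ∂((μSp i j).map L) - ∫ x, ψ x ∂((μSn i j).map L) =
        ∑ a : Fin d × Fin d, 1 / |S.det| * (S a.1 i * S a.2 j) *
          (∫ x, ψ x ∂(μp a.1 a.2) - ∫ x, ψ x ∂(μn a.1 a.2)) := by
    intro i j ψ hψ hψc
    have hmap : ∀ ν : Measure (EuclideanSpace ℝ (Fin d)),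
        ∫ x, ψ x ∂(ν.map L) = ∫ x, (ψ ∘ L) x ∂ν :=
      fun ν => L.toHomeomorph.measurableEmbedding.integral_map _
    rw [hmap, hmap, hμS i j (ψ ∘ L) (hψ.comp L.contDiff)
      (hψc.comp_homeomorph L.toHomeomorph)]
    calc ∫ x, f (L x) * secondPartial d (ψ ∘ L) i j x
        = ∫ x, (fun y => ∑ a : Fin d × Fin d,
            S a.1 i * S a.2 j * (f y * secondPartial d ψ a.1 a.2 y)) (L x) := by
          congr 1 with x
          rw [secondPartial_comp_euclideanEquiv hψ, Finset.mul_sum]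
          exact Finset.sum_congr rfl fun a _ => by ring
      _ = _ := by
          rw [S.integral_comp_euclideanEquiv hS fun y => ∑ a : Fin d × Fin d,
            S a.1 i * S a.2 j * (f y * secondPartial d ψ a.1 a.2 y), integral_finsetSum, Finset.mul_sum]
          · refine Finset.sum_congr rfl fun a _ => ?_
            rw [integral_const_mul, hμ a.1 a.2 ψ hψ hψc, ← mul_assoc]
          · exact fun a _ => ((hfc.mul (continuous_secondPartial hψ _ _)
              ).integrable_of_hasCompactSupport (hψc.secondPartial _ _).mul_left).const_mul _
  ext i j
  have : IsFiniteMeasureOnCompacts ((μSp i j).map L) :=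
    Measure.IsFiniteMeasureOnCompacts.map _ L.toHomeomorph
  have : IsFiniteMeasureOnCompacts ((μSn i j).map L) :=
    Measure.IsFiniteMeasureOnCompacts.map _ L.toHomeomorph
  have key := measureReal_sub_eq_sum_of_integral_contDiff _ _ _ (fun a : Fin d × Fin d => μp a.1 a.2)
    (fun a : Fin d × Fin d => μn a.1 a.2) (htest i j) hAbdd
  rw [measureReal_def, measureReal_def, Measure.map_apply L.continuous.measurable hA,
    Measure.map_apply L.continuous.measurable hA] at key
  refine key.trans ?_
  rw [Fintype.sum_prod_type_right]
  simp only [Matrix.smul_apply, Matrix.mul_apply, Matrix.transpose_apply, Matrix.of_apply,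
    Finset.sum_mul, Finset.mul_sum, smul_eq_mul, measureReal_def]
  exact Finset.sum_congr rfl fun l _ => Finset.sum_congr rfl fun k _ => by ring
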